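/- Let H be a finite simple graph with maximum degree Δ(H) ≥ 6 and clique number ω(H) ≤ Δ(H) − 1, and let p ≥ 4 and q ≥ 2 be integers with p + q = Δ(H) + 1. Then there exists a partition of V(H) into two sets V_1 and V_2 such that the induced subgraph H[V_1] is K_p-free and the induced subgraph H[V_2] is K_q-free. -/

import Mathlib

/-!
Removing a maximal independent set `I` that meets every largest clique lowers both the maximum
degree and the clique number by one, and putting `I` back into one of the two parts of a splitting
raises the size of the cliques of that part by at most one. King's theorem supplies `I` whenever
the cliques have more than two thirds of `Δ + 1` vertices, so by induction on `q` everything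
reduces to the trivial case `q = 1` and, for `p = 4`, to the case `q = 3` of graphs of maximum
degree `6` without `6`-cliques.

In the latter case, removing `I` leaves a graph of maximum degree `5` without `5`-cliques, and it
remains to find a set that meets every `4`-clique and spans no triangle together with `I`. The
`4`-cliques fall into clusters, the connected components of their intersection graph. By the
lemmas of Hajnal and Kostochka, the pairwise intersecting `4`-cliques of a cluster have a common
vertex. In any other cluster there are disjoint `4`-cliques that meet a common one, necessarily in
complementary pairs of vertices. These pairs extend to a path or a cycle of pairs, and one vertex
from every second pair suffices. Only in a cycle of odd length are vertices of two consecutive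
pairs needed. There every vertex has degree `5`, hence at most one neighbour in `I`, and a vertex
of `I` cannot be adjacent to all the pairs, so two vertices of consecutive pairs without a common
neighbour in `I` can be found. In each cluster at most one selected vertex has neighbours outside
the cluster, and a lopsided version of Haxell's theorem on independent transversals makes these
choices compatible.
-/

open Finset

section IndependentTransversals

variable {V ι : Type*} {G : SimpleGraph V} {P : ι → Finset V} {T : Finset ι} {f : ι → V}

/-- `f` is an independent transversal of the parts `P i`, `i ∈ T`: it selects a vertex of each of
these parts, and no two selected vertices are adjacent. Values of `f` outside `T` are irrelevant. -/
structure IsIndepTransversal (G : SimpleGraph V) (P : ι → Finset V) (T : Finset ι) (f : ι → V) :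
    Prop where
  mem : ∀ i ∈ T, f i ∈ P i
  not_adj : ∀ i ∈ T, ∀ j ∈ T, ¬ G.Adj (f i) (f j)

theorem IsIndepTransversal.update [DecidableEq ι] (hf : IsIndepTransversal G P T f) {j : ι}
    {y : V} (hy : y ∈ P j) (hadj : ∀ i ∈ T, ¬ G.Adj y (f i)) :
    IsIndepTransversal G P (insert j T) (Function.update f j y) where
  mem i hi := by
    rcases eq_or_ne i j with rfl | hij
    · simpa using hy
    · simpa [hij] using hf.mem i (mem_of_mem_insert_of_ne hi hij)
  not_adj i hi k hk := by
    have hadj' : ∀ i ∈ T, ¬ G.Adj (f i) y := fun i hi h ↦ hadj i hi h.symm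
    have hf' := hf.not_adj
    simp only [mem_insert] at hi hk
    simp only [Function.update_apply]
    split_ifs <;> simp_all

theorem IsIndepTransversal.piecewise [DecidableEq ι] {P' : ι → Finset V} {W : Finset ι} {g : ι → V}
    (hf : IsIndepTransversal G P T f) (hg : IsIndepTransversal G P' (T \ W) g)
    (hP' : ∀ i, P' i ⊆ P i) (hadj : ∀ i, ∀ y ∈ P' i, ∀ j ∈ W, ¬ G.Adj y (f j)) :
    IsIndepTransversal G P T (W.piecewise f g) where
  mem i hi := by
    by_cases hiW : i ∈ W
    · simpa [hiW] using hf.mem i hi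
    · simpa [hiW] using hP' i (hg.mem i (mem_sdiff.2 ⟨hi, hiW⟩))
  not_adj i hi j hj := by
    have hcross : ∀ a ∈ T, a ∉ W → ∀ b ∈ W, ¬ G.Adj (g a) (f b) := fun a ha haW ↦
      hadj a _ (hg.mem a (mem_sdiff.2 ⟨ha, haW⟩))
    by_cases hiW : i ∈ W <;> by_cases hjW : j ∈ W <;>
      simp only [Finset.piecewise, hiW, hjW, if_true, if_false]
    · exact hf.not_adj i hi j hj
    · exact fun h ↦ hcross j hj hjW i hiW h.symm
    · exact hcross i hi hiW j hjW
    · exact hg.not_adj i (mem_sdiff.2 ⟨hi, hiW⟩) j (mem_sdiff.2 ⟨hj, hjW⟩)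

variable [DecidableRel G.Adj]

theorem exists_adj_of_minimalFor_card_adj {x y : V} {M g : ι → V} {j : ι}
    (hM : MinimalFor (IsIndepTransversal G P T) (fun g ↦ #{i ∈ T | G.Adj x (g i)}) M)
    (hg : IsIndepTransversal G P T g) (hgM : ∀ i ∈ T, G.Adj x (g i) → G.Adj x (M i))
    (hj : j ∈ T) (hxj : G.Adj x (M j)) (hyj : y ∈ P j) (hxy : ¬ G.Adj x y) :
    ∃ i ∈ T, G.Adj y (g i) := by
  classical
  by_contra! hfree
  have hswap := hg.update hyj hfree
  rw [insert_eq_self.2 hj] at hswap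
  refine (hM.not_prop_of_lt (card_lt_card ?_)) hswap
  refine (ssubset_iff_of_subset fun i hi ↦ ?_).2 ⟨j, by simp [hj, hxj], by simp [hxy]⟩
  rcases eq_or_ne i j with rfl | hij
  · simp [hj, hxj]
  · simp only [mem_filter, Function.update_of_ne hij] at hi ⊢
    exact ⟨hi.1, hgM i hi.1 hi.2⟩

/-- The vertices of `S` that have no neighbour in `X`. -/
def undominated (G : SimpleGraph V) [DecidableRel G.Adj] (X S : Finset V) : Finset V :=
  {y ∈ S | ∀ x ∈ X, ¬ G.Adj y x}

theorem mem_undominated {X S : Finset V} {y : V} :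
    y ∈ undominated G X S ↔ y ∈ S ∧ ∀ x ∈ X, ¬ G.Adj y x :=
  mem_filter

variable [DecidableEq V]

theorem image_piecewise_union [DecidableEq ι] {W₁ W₂ : Finset ι} (h : Disjoint W₁ W₂)
    (f g : ι → V) :
    (W₁ ∪ W₂).image (W₁.piecewise f g) = W₁.image f ∪ W₂.image g := by
  rw [image_union, image_congr (g := f) fun i hi ↦ piecewise_eq_of_mem _ _ _ hi,
    image_congr (s := W₂) (g := g) fun i hi ↦
      piecewise_eq_of_notMem _ _ _ (disjoint_right.1 h hi)]

theorem IsIndepTransversal.undominated [DecidableEq ι] {W : Finset ι} {x : V}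
    (hf : IsIndepTransversal G P T f) (hW : W = {i ∈ T | G.Adj x (f i)}) :
    IsIndepTransversal G (fun i ↦ undominated G (insert x (W.image f)) (P i)) (T \ W) f := by
  subst hW
  refine ⟨fun i hi ↦ ?_, fun i hi j hj ↦ hf.not_adj i (sdiff_subset hi) j (sdiff_subset hj)⟩
  obtain ⟨hiT, hiW⟩ := mem_sdiff.1 hi
  simp only [mem_undominated, forall_mem_insert, forall_mem_image]
  exact ⟨hf.mem i hiT, fun h ↦ hiW (mem_filter.2 ⟨hiT, h.symm⟩),
    fun j hj ↦ hf.not_adj i hiT j (filter_subset _ _ hj)⟩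

theorem exists_adj_of_undominated [DecidableEq ι] {A : Finset V} {x y : V} {M g : ι → V}
    (hA : ∀ g, IsIndepTransversal G P T g → ∀ y ∈ A, ∃ i ∈ T, G.Adj y (g i))
    (hM : MinimalFor (IsIndepTransversal G P T) (fun g ↦ #{i ∈ T | G.Adj x (g i)}) M)
    {W : Finset ι} (hW : W = {i ∈ T | G.Adj x (M i)})
    (hg : IsIndepTransversal G (fun i ↦ undominated G (insert x (W.image M)) (P i)) (T \ W) g)
    (hy : y ∈ undominated G (insert x (W.image M)) (A ∪ W.biUnion P)) :
    ∃ i ∈ T \ W, G.Adj y (g i) := by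
  simp only [mem_undominated, forall_mem_insert, forall_mem_image] at hy
  obtain ⟨hyP, hyx, hyW⟩ := hy
  have hfree : ∀ i ∈ T \ W, ¬ G.Adj (g i) x := fun i hi ↦
    (mem_undominated.1 (hg.mem i hi)).2 x (mem_insert_self _ _)
  have hglue : IsIndepTransversal G P T (W.piecewise M g) :=
    hM.prop.piecewise hg (fun i ↦ filter_subset _ _) fun i z hz j hj ↦
      (mem_undominated.1 hz).2 _ (mem_insert_of_mem (mem_image_of_mem M hj))
  have hadj : ∃ i ∈ T, G.Adj y (W.piecewise M g i) := by
    obtain hyA | ⟨j, hj, hyj⟩ := (mem_union.1 hyP).imp_right mem_biUnion.1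
    · exact hA _ hglue y hyA
    obtain ⟨hjT, hxj⟩ := mem_filter.1 (hW ▸ hj)
    refine exists_adj_of_minimalFor_card_adj hM hglue (fun i hi hxi ↦ ?_) hjT hxj hyj
      fun h ↦ hyx h.symm
    by_cases hiW : i ∈ W
    · simpa [hiW] using hxi
    · exact absurd (by simpa [hiW] using hxi.symm) (hfree i (mem_sdiff.2 ⟨hi, hiW⟩))
  obtain ⟨i, hi, hyi⟩ := hadj
  have hiW : i ∉ W := fun h ↦ hyW h (by simpa [h] using hyi)
  exact ⟨i, mem_sdiff.2 ⟨hi, hiW⟩, by simpa [hiW] using hyi⟩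

/- A vertex `x ∈ A` together with the parts whose representative is adjacent to `x`, the transversal
being chosen so that there are as few of them as possible, is contracted into a new set `A`. -/
theorem exists_dominating_of_forall_indepTransversal_adj {A : Finset V}
    (hf : IsIndepTransversal G P T f)
    (hA : ∀ g, IsIndepTransversal G P T g → ∀ y ∈ A, ∃ i ∈ T, G.Adj y (g i)) :
    ∃ W ⊆ T, ∃ (X : Finset V) (g : ι → V), #X ≤ #W ∧ X ⊆ A ∪ W.biUnion P ∧
      (∀ i ∈ W, g i ∈ P i) ∧ undominated G (X ∪ W.image g) (A ∪ W.biUnion P) = ∅ := by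
  classical
  induction hn : #T using Nat.strong_induction_on generalizing T P A f with
  | _ n ih =>
  subst hn
  obtain rfl | ⟨x, hxA⟩ := A.eq_empty_or_nonempty
  · exact ⟨∅, by simp, ∅, f, by simp [undominated]⟩
  obtain ⟨M, hM⟩ := exists_minimalFor_of_wellFoundedLT (IsIndepTransversal G P T)
    (fun g ↦ #{i ∈ T | G.Adj x (g i)}) ⟨f, hf⟩
  set W₁ : Finset ι := {i ∈ T | G.Adj x (M i)} with hW₁
  have hW₁T : W₁ ⊆ T := filter_subset _ _
  have hW₁ne : W₁.Nonempty := (hA M hM.prop x hxA).imp fun i hi ↦ mem_filter.2 hi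
  obtain ⟨W₂, hW₂, X, g, hX, hXsub, hg, hdom⟩ :=
    ih _ (card_lt_card (sdiff_ssubset hW₁T hW₁ne))
      (hM.prop.undominated hW₁)
      (fun g hg y hy ↦ exists_adj_of_undominated hA hM hW₁ hg hy) rfl
  have hdisj : Disjoint W₁ W₂ := (disjoint_sdiff.mono_right hW₂)
  refine ⟨W₁ ∪ W₂, union_subset hW₁T (hW₂.trans sdiff_subset), insert x X, W₁.piecewise M g,
    ?_, ?_, ?_, ?_⟩
  · rw [card_union_of_disjoint hdisj]
    have := card_pos.2 hW₁ne
    have := card_insert_le x X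
    omega
  · intro y hy
    obtain rfl | hy := mem_insert.1 hy
    · exact mem_union_left _ hxA
    have := hXsub hy
    simp only [mem_union, mem_biUnion, mem_undominated] at this ⊢
    grind
  · intro i hi
    by_cases hiW : i ∈ W₁
    · simpa [hiW] using hM.prop.mem i (hW₁T hiW)
    · simpa [hiW] using (mem_undominated.1 (hg i ((mem_union.1 hi).resolve_left hiW))).1
  · rw [image_piecewise_union hdisj, eq_empty_iff_forall_notMem] at *
    intro y hy
    specialize hdom y
    simp only [mem_undominated, mem_union, mem_biUnion, mem_insert] at hy hdom ⊢
    grind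

end IndependentTransversals

/-- A lopsided version of Haxell's theorem, which is the case `2 * D ≤ #(P i)`. -/
theorem exists_isIndepTransversal {V ι : Type*} {G : SimpleGraph V} [G.LocallyFinite]
    {P : ι → Finset V} {D : ℕ}
    (hdisj : Pairwise fun i j ↦ Disjoint (P i) (P j)) (hne : ∀ i, (P i).Nonempty)
    (hdeg : ∀ i, ∀ v ∈ P i, G.degree v ≤ D ∧ G.degree v + D ≤ #(P i)) (T : Finset ι) :
    ∃ f, IsIndepTransversal G P T f := by
  classical
  induction T using Finset.induction_on with
  | empty => exact ⟨fun i ↦ (hne i).choose, by simp, by simp⟩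
  | insert j T hj ih =>
  obtain ⟨f, hf⟩ := ih
  by_contra! hno
  obtain ⟨W, hWT, X, g, hXW, hXsub, hg, hdom⟩ :=
    exists_dominating_of_forall_indepTransversal_adj (A := P j) hf fun g hg y hy ↦ by
      by_contra! hadj
      exact hno _ (hg.update hy hadj)
  have hcover : (insert j W).biUnion P ⊆
      (X.biUnion fun x ↦ G.neighborFinset x) ∪ W.biUnion fun i ↦ G.neighborFinset (g i) := by
    intro y hy
    have hy' := eq_empty_iff_forall_notMem.1 hdom y
    rw [biUnion_insert] at hy
    simp only [mem_undominated, hy, true_and, not_forall, not_not, mem_union, mem_image] at hy'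
    simp only [mem_union, mem_biUnion, SimpleGraph.mem_neighborFinset]
    grind [SimpleGraph.adj_comm]
  have hX : ∑ x ∈ X, G.degree x ≤ #W * D := by
    refine (sum_le_card_nsmul X _ D fun x hx ↦ ?_).trans (Nat.mul_le_mul_right D hXW)
    rw [← biUnion_insert] at hXsub
    obtain ⟨i, -, hi⟩ := mem_biUnion.1 (hXsub hx)
    exact (hdeg i x hi).1
  have hcard : ∑ i ∈ insert j W, #(P i) < ∑ i ∈ insert j W, #(P i) := calc
    _ = #((insert j W).biUnion P) := (card_biUnion fun i _ k _ hik ↦ hdisj hik).symm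
    _ ≤ ∑ x ∈ X, G.degree x + ∑ i ∈ W, G.degree (g i) :=
      (card_le_card hcover).trans <| (card_union_le _ _).trans <|
        add_le_add card_biUnion_le card_biUnion_le
    _ ≤ ∑ i ∈ W, (G.degree (g i) + D) := by
      rw [sum_add_distrib, sum_const, smul_eq_mul]
      omega
    _ ≤ ∑ i ∈ W, #(P i) := sum_le_sum fun i hi ↦ (hdeg i _ (hg i hi)).2
    _ < ∑ i ∈ insert j W, #(P i) := by
      rw [sum_insert fun h ↦ hj (hWT h)]
      exact Nat.lt_add_of_pos_left (card_pos.2 (hne j))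
  exact hcard.false

section CliqueFamilies

variable {V : Type*} [DecidableEq V] {G : SimpleGraph V} {k d : ℕ}

theorem subset_insert_neighborFinset_of_isClique {Q : Finset V} {v : V}
    [Fintype (G.neighborSet v)] (hQ : G.IsClique Q) (hv : v ∈ Q) :
    Q ⊆ insert v (G.neighborFinset v) := by
  intro x hx
  rcases eq_or_ne x v with rfl | hxv
  · exact mem_insert_self _ _
  · exact mem_insert_of_mem ((G.mem_neighborFinset v x).2 (hQ hv hx hxv.symm))

theorem card_insert_neighborFinset (v : V) [Fintype (G.neighborSet v)] :
    #(insert v (G.neighborFinset v)) = G.degree v + 1 := by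
  rw [card_insert_of_notMem (G.notMem_neighborFinset_self v), G.card_neighborFinset_eq_degree]

theorem card_neighborFinset_sdiff_add_card_le {U S : Finset V} {v : V}
    [Fintype (G.neighborSet v)] (hSU : S ⊆ U) (hS : S ⊆ insert v (G.neighborFinset v)) :
    #(G.neighborFinset v \ U) + #S ≤ G.degree v + 1 := by
  rw [← card_insert_neighborFinset,
    ← card_union_of_disjoint (disjoint_sdiff_self_left.mono_right hSU)]
  exact card_le_card (union_subset (sdiff_subset.trans (subset_insert _ _)) hS)

theorem two_mul_le_card_inter_add [G.LocallyFinite] (hd : ∀ v, G.degree v ≤ d) {A B : Finset V}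
    (hA : G.IsNClique k A) (hB : G.IsNClique k B) (hAB : ¬ Disjoint A B) :
    2 * k ≤ #(A ∩ B) + (d + 1) := by
  obtain ⟨v, hvA, hvB⟩ := not_disjoint_iff.1 hAB
  have hunion : #(A ∪ B) ≤ d + 1 := calc
    _ ≤ #(insert v (G.neighborFinset v)) := card_le_card <| union_subset
      (subset_insert_neighborFinset_of_isClique hA.isClique hvA)
      (subset_insert_neighborFinset_of_isClique hB.isClique hvB)
    _ ≤ d + 1 := (card_insert_neighborFinset v).trans_le (Nat.succ_le_succ (hd v))
  have := card_union_add_card_inter A B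
  have := hA.card_eq
  have := hB.card_eq
  omega

variable [Fintype V] {S : Finset (Finset V)}

theorem inf_subset_sup (hS : S.Nonempty) : S.inf id ⊆ S.sup id := by
  obtain ⟨A, hA⟩ := hS
  exact (inf_le (f := id) hA).trans (le_sup (f := id) hA)

theorem sup_subset_insert_neighborFinset {v : V} [Fintype (G.neighborSet v)]
    (hclique : ∀ A ∈ S, G.IsClique (A : Set V)) (hv : v ∈ S.inf id) :
    S.sup id ⊆ insert v (G.neighborFinset v) :=
  Finset.sup_le fun A hA ↦
    subset_insert_neighborFinset_of_isClique (hclique A hA) (mem_inf.1 hv A hA)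

theorem isClique_inf_union_inter_sup (hS : S.Nonempty) (hclique : ∀ A ∈ S, G.IsClique (A : Set V))
    {Q : Finset V} (hQ : G.IsClique Q) : G.IsClique (S.inf id ∪ (Q ∩ S.sup id) : Finset V) := by
  have hcross : ∀ x ∈ S.inf id, ∀ y ∈ S.sup id, x ≠ y → G.Adj x y := by
    intro x hx y hy hxy
    obtain ⟨A, hA, hyA⟩ := mem_sup.1 hy
    exact hclique A hA (mem_inf.1 hx A hA) hyA hxy
  intro x hx y hy hxy
  simp only [coe_union, coe_inter, Set.mem_union, Set.mem_inter_iff, mem_coe] at hx hy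
  obtain hx | ⟨hxQ, hx⟩ := hx
  · exact hcross x hx y (hy.elim (fun h ↦ inf_subset_sup hS h) And.right) hxy
  · obtain hy | ⟨hyQ, -⟩ := hy
    · exact (hcross y hy x hx hxy.symm).symm
    · exact hQ hxQ hyQ hxy

/-- **Hajnal's clique collection lemma** -/
theorem two_mul_le_card_inf_add_card_sup (hS : S.Nonempty) (hclique : ∀ A ∈ S, G.IsNClique k A)
    (hfree : G.CliqueFree (k + 1)) : 2 * k ≤ #(S.inf id) + #(S.sup id) := by
  induction hS using Finset.Nonempty.cons_induction with
  | singleton A => simp [(hclique A (by simp)).card_eq, two_mul]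
  | cons Q S hQS hS ih =>
    rw [forall_mem_cons] at hclique
    obtain ⟨hQ, hS'⟩ := hclique
    have hle : #(S.inf id ∪ (Q ∩ S.sup id)) ≤ k := by
      by_contra! hlt
      exact hfree.mono hlt _
        ⟨isClique_inf_union_inter_sup hS (fun A hA ↦ (hS' A hA).isClique) hQ.isClique, rfl⟩
    have hinter : S.inf id ∩ (Q ∩ S.sup id) = Q ∩ S.inf id := by
      rw [inter_left_comm, inter_eq_left.2 (inf_subset_sup hS)]
    have hunion := card_union_add_card_inter (S.inf id) (Q ∩ S.sup id)
    rw [hinter] at hunion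
    have := card_union_add_card_inter Q (S.sup id)
    have := ih hS'
    have := hQ.card_eq
    simp only [inf_cons, sup_cons, id, inf_eq_inter, sup_eq_union]
    omega

/-- **Kostochka's lemma** -/
theorem inf_nonempty_of_not_disjoint [G.LocallyFinite] (hd : ∀ v, G.degree v ≤ d)
    (hk : 2 * (d + 1) ≤ 3 * k) (hfree : G.CliqueFree (k + 1)) (hS : S.Nonempty)
    (hclique : ∀ A ∈ S, G.IsNClique k A) (hmeet : ∀ A ∈ S, ∀ B ∈ S, ¬ Disjoint A B) :
    (S.inf id).Nonempty := by
  induction hS using Finset.Nonempty.cons_induction with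
  | singleton A => simpa [nonempty_iff_ne_empty] using hmeet A (by simp) A (by simp)
  | cons Q S hQS hS ih =>
    have hhajnal := two_mul_le_card_inf_add_card_sup (S := cons Q S hQS) (by simp) hclique hfree
    simp only [forall_mem_cons] at hclique hmeet
    obtain ⟨⟨-, hQmeet⟩, hmeet⟩ := hmeet
    obtain ⟨hQ, hclique⟩ := hclique
    obtain ⟨v, hv⟩ := ih hclique fun A hA B hB ↦ (hmeet A hA).2 B hB
    simp only [inf_cons, sup_cons, id, inf_eq_inter, sup_eq_union] at hhajnal ⊢
    by_contra hempty
    rw [not_nonempty_iff_eq_empty] at hempty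
    have hsup : #(S.sup id) ≤ d + 1 :=
      (card_le_card
        (sup_subset_insert_neighborFinset (fun A hA ↦ (hclique A hA).isClique) hv)).trans
        ((card_insert_neighborFinset v).trans_le (Nat.succ_le_succ (hd v)))
    have hinter : ∀ A ∈ S, Q ∩ A = Q ∩ S.sup id := by
      intro A hA
      refine eq_of_subset_of_card_le (inter_subset_inter_left (le_sup (f := id) hA)) ?_
      have := two_mul_le_card_inter_add hd hQ (hclique A hA) (hQmeet A hA)
      have := card_union_add_card_inter Q (S.sup id)
      rw [hempty, card_empty] at hhajnal
      have := hQ.card_eq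
      omega
    obtain ⟨A, hA⟩ := hS
    obtain ⟨x, hxQ, hxA⟩ := not_disjoint_iff.1 (hQmeet A hA)
    refine notMem_empty x (hempty ▸ mem_inter.2 ⟨hxQ, mem_inf.2 fun B hB ↦ ?_⟩)
    have hxB : x ∈ Q ∩ B := by
      rw [hinter B hB, ← hinter A hA]
      exact mem_inter.2 ⟨hxQ, hxA⟩
    exact (mem_inter.1 hxB).2

end CliqueFamilies

section Clusters

variable {V : Type*} {G : SimpleGraph V} {k : ℕ}

/-- A set of vertices is closed if it contains every `k`-clique that meets it. -/
def CliqueClosed (G : SimpleGraph V) (k : ℕ) (S : Finset V) : Prop :=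
  ∀ Q, G.IsNClique k Q → ¬ Disjoint Q S → Q ⊆ S

/-- A cluster is the union of a connected component of the intersection graph of the `k`-cliques
of `G`, encoded as an atom among the closed sets that contain a `k`-clique. -/
structure IsCluster (G : SimpleGraph V) (k : ℕ) (U : Finset V) : Prop where
  closed : CliqueClosed G k U
  exists_clique : ∃ Q ⊆ U, G.IsNClique k Q
  subset_of_closed : ∀ S, CliqueClosed G k S → ¬ Disjoint S U → U ⊆ S

theorem IsCluster.eq_of_not_disjoint {U U' : Finset V} (hU : IsCluster G k U)
    (hU' : IsCluster G k U') (h : ¬ Disjoint U U') : U = U' :=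
  (hU.subset_of_closed U' hU'.closed fun h' ↦ h h'.symm).antisymm
    (hU'.subset_of_closed U hU.closed h)

theorem CliqueClosed.sdiff [DecidableEq V] {S T : Finset V} (hS : CliqueClosed G k S)
    (hT : CliqueClosed G k T) : CliqueClosed G k (S \ T) := by
  intro Q hQ hmeet
  obtain ⟨x, hxQ, hx⟩ := not_disjoint_iff.1 hmeet
  obtain ⟨hxS, hxT⟩ := mem_sdiff.1 hx
  refine subset_sdiff.2 ⟨hS Q hQ (not_disjoint_iff.2 ⟨x, hxQ, hxS⟩), ?_⟩
  by_contra hQT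
  exact hxT (hT Q hQ hQT hxQ)

variable [Finite V]

theorem exists_isCluster_superset (hk : 0 < k) {Q : Finset V} (hQ : G.IsNClique k Q) :
    ∃ U, IsCluster G k U ∧ Q ⊆ U := by
  classical
  cases nonempty_fintype V
  obtain ⟨v, hv⟩ : Q.Nonempty := card_pos.1 (hQ.card_eq ▸ hk)
  obtain ⟨U, ⟨hU, hvU⟩, hmin⟩ := exists_minimal_of_wellFoundedLT
    (fun S ↦ CliqueClosed G k S ∧ v ∈ S) ⟨univ, fun Q _ _ ↦ subset_univ Q, mem_univ v⟩
  have hQU : Q ⊆ U := hU Q hQ (not_disjoint_iff.2 ⟨v, hv, hvU⟩)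
  refine ⟨U, ⟨hU, ⟨Q, hQU, hQ⟩, fun S hS hSU ↦ ?_⟩, hQU⟩
  by_cases hvS : v ∈ S
  · have hinter : CliqueClosed G k (S \ (S \ U)) := hS.sdiff (hS.sdiff hU)
    rw [sdiff_sdiff_right_self] at hinter
    exact (hmin ⟨hinter, mem_inter.2 ⟨hvS, hvU⟩⟩ inter_subset_right).trans inter_subset_left
  · have hsub := hmin ⟨hU.sdiff hS, mem_sdiff.2 ⟨hvU, hvS⟩⟩ sdiff_subset
    exact absurd (disjoint_sdiff.mono_right hsub) hSU

theorem IsCluster.not_disjoint_of_forall_trans {U : Finset V} (hU : IsCluster G k U) (hk : 0 < k)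
    (htrans : ∀ A B C, A ⊆ U → G.IsNClique k A → G.IsNClique k B → G.IsNClique k C →
      ¬ Disjoint A B → ¬ Disjoint B C → ¬ Disjoint A C)
    {A B : Finset V} (hA : G.IsNClique k A) (hAU : A ⊆ U) (hB : G.IsNClique k B) (hBU : B ⊆ U) :
    ¬ Disjoint A B := by
  classical
  cases nonempty_fintype V
  have hmem : ∀ x, x ∈ ({C ∈ G.cliqueFinset k | ¬ Disjoint A C} : Finset _).biUnion id ↔
      ∃ C, G.IsNClique k C ∧ ¬ Disjoint A C ∧ x ∈ C := by
    simp [SimpleGraph.mem_cliqueFinset_iff, and_assoc]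
  have hclosed : CliqueClosed G k (({C ∈ G.cliqueFinset k | ¬ Disjoint A C}).biUnion id) := by
    intro Q hQ hmeet x hx
    obtain ⟨y, hyQ, hy⟩ := not_disjoint_iff.1 hmeet
    obtain ⟨C, hC, hAC, hyC⟩ := (hmem y).1 hy
    exact (hmem x).2
      ⟨Q, hQ, htrans A C Q hAU hA hC hQ hAC (not_disjoint_iff.2 ⟨y, hyC, hyQ⟩), hx⟩
  obtain ⟨a, ha⟩ : A.Nonempty := card_pos.1 (hA.card_eq ▸ hk)
  obtain ⟨b, hb⟩ : B.Nonempty := card_pos.1 (hB.card_eq ▸ hk)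
  have ha' := (hmem a).2 ⟨A, hA, not_disjoint_iff.2 ⟨a, ha, ha⟩, ha⟩
  obtain ⟨C, hC, hAC, hbC⟩ :=
    (hmem b).1 (hU.subset_of_closed _ hclosed (not_disjoint_iff.2 ⟨a, ha', hAU ha⟩) (hBU hb))
  exact htrans A C B hAU hA hC hB hAC (not_disjoint_iff.2 ⟨b, hbC, hb⟩)

end Clusters

section LocalHittingSets

variable {V : Type*} [Fintype V] {G : SimpleGraph V} [DecidableRel G.Adj]
  {k d D : ℕ} {Ok : Finset V → Prop} {U : Finset V}

/-- `F ⊆ U` meets every `k`-clique contained in `U`, and `v` is the only vertex of `F` that may have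
neighbours outside `U`. -/
structure IsLocalHittingSet (G : SimpleGraph V) [DecidableRel G.Adj] (k : ℕ) (U : Finset V) (v : V)
    (F : Finset V) : Prop where
  subset : F ⊆ U
  not_disjoint : ∀ Q ⊆ U, G.IsNClique k Q → ¬ Disjoint Q F
  neighborFinset_subset : ∀ u ∈ F, u ≠ v → G.neighborFinset u ⊆ U

/-- The subgraph of the edges of `G` that are not contained in a single cluster. -/
def crossingGraph (G : SimpleGraph V) (k : ℕ) : SimpleGraph V where
  Adj a b := G.Adj a b ∧ ∀ U, IsCluster G k U → a ∈ U → b ∉ U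
  symm := ⟨fun _ _ h ↦ ⟨h.1.symm, fun U hU hb ha ↦ h.2 U hU ha hb⟩⟩
  loopless := ⟨fun _ h ↦ h.1.ne rfl⟩

theorem IsLocalHittingSet.not_adj {U' F F' : Finset V} {u v a b : V} (hU : IsCluster G k U)
    (hU' : IsCluster G k U') (hF : IsLocalHittingSet G k U u F)
    (hF' : IsLocalHittingSet G k U' v F') (hne : U ≠ U') (huv : ¬ (crossingGraph G k).Adj u v)
    (ha : a ∈ F) (hb : b ∈ F') : ¬ G.Adj a b := by
  intro hab
  have hdisj : ∀ x, x ∈ U → x ∉ U' := fun x hx hx' ↦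
    hne (hU.eq_of_not_disjoint hU' (not_disjoint_iff.2 ⟨x, hx, hx'⟩))
  have hau : a = u := by
    by_contra hau
    exact hdisj b (hF.neighborFinset_subset a ha hau ((G.mem_neighborFinset a b).2 hab))
      (hF'.subset hb)
  have hbv : b = v := by
    by_contra hbv
    exact hdisj a (hF.subset ha)
      (hF'.neighborFinset_subset b hb hbv ((G.mem_neighborFinset b a).2 hab.symm))
  subst hau hbv
  refine huv ⟨hab, fun W hW haW hbW ↦ hdisj b ?_ (hF'.subset hb)⟩
  rwa [hU.eq_of_not_disjoint hW (not_disjoint_iff.2 ⟨a, hF.subset ha, haW⟩)]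

variable [DecidableEq V]

/-- `U` contains a nonempty set `C` of vertices, each of which is the exceptional vertex of a local
hitting set with property `Ok`. The numbers of edges leaving `U` at the vertices of `C` are bounded
so that the sets `C` of disjoint clusters have an independent transversal. -/
def HasLocalHittingSets (G : SimpleGraph V) [DecidableRel G.Adj] (k D : ℕ) (Ok : Finset V → Prop)
    (U : Finset V) : Prop :=
  ∃ C ⊆ U, C.Nonempty ∧ ∀ v ∈ C,
    #(G.neighborFinset v \ U) ≤ D ∧ #(G.neighborFinset v \ U) + D ≤ #C ∧
      ∃ F, Ok F ∧ IsLocalHittingSet G k U v F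

theorem degree_crossingGraph_le {v : V} [Fintype ((crossingGraph G k).neighborSet v)]
    (hU : IsCluster G k U) (hv : v ∈ U) :
    (crossingGraph G k).degree v ≤ #(G.neighborFinset v \ U) := by
  rw [← SimpleGraph.card_neighborFinset_eq_degree]
  refine card_le_card fun w hw ↦ ?_
  obtain ⟨hadj, hcross⟩ := (SimpleGraph.mem_neighborFinset _ _ _).1 hw
  exact mem_sdiff.2 ⟨(G.mem_neighborFinset v w).2 hadj, hcross U hU hv⟩

theorem exists_hittingFamily (hk : 0 < k)
    (h : ∀ U, IsCluster G k U → HasLocalHittingSets G k D Ok U) :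
    ∃ 𝓕 : Finset (Finset V), (∀ F ∈ 𝓕, Ok F) ∧
      (∀ Q, G.IsNClique k Q → ∃ F ∈ 𝓕, ¬ Disjoint Q F) ∧
      ∀ F ∈ 𝓕, ∀ F' ∈ 𝓕, F ≠ F' → ∀ a ∈ F, ∀ b ∈ F', ¬ G.Adj a b := by
  classical
  choose C hCU hCne hC using fun U : {U // IsCluster G k U} ↦ h U.1 U.2
  have hdisj : Pairwise fun U U' ↦ Disjoint (C U) (C U') := by
    intro U U' hne
    by_contra hmeet
    exact hne <| Subtype.ext <| U.2.eq_of_not_disjoint U'.2 fun hUU' ↦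
      hmeet (hUU'.mono (hCU U) (hCU U'))
  obtain ⟨f, hf⟩ := exists_isIndepTransversal (G := crossingGraph G k) (D := D) hdisj hCne
    (fun U v hv ↦ by
      have hle := degree_crossingGraph_le U.2 (hCU U hv)
      obtain ⟨hD, hDC, -⟩ := hC U v hv
      exact ⟨hle.trans hD, (Nat.add_le_add_right hle D).trans hDC⟩) univ
  choose F hOk hF using fun U ↦ (hC U (f U) (hf.mem U (mem_univ U))).2.2
  refine ⟨univ.image F, forall_mem_image.2 fun U _ ↦ hOk U, fun Q hQ ↦ ?_, ?_⟩
  · obtain ⟨U, hU, hQU⟩ := exists_isCluster_superset hk hQ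
    exact ⟨F ⟨U, hU⟩, mem_image_of_mem F (mem_univ _), (hF ⟨U, hU⟩).not_disjoint Q hQU hQ⟩
  · simp only [forall_mem_image]
    intro U hU U' hU' hne a ha b hb
    exact (hF U).not_adj U.2 U'.2 (hF U') (fun h ↦ hne (congrArg F (Subtype.ext h)))
      (hf.not_adj U hU U' hU') ha hb

theorem IsCluster.hasLocalHittingSets_of_not_disjoint (hU : IsCluster G k U)
    (hmeet : ∀ A ⊆ U, ∀ B ⊆ U, G.IsNClique k A → G.IsNClique k B → ¬ Disjoint A B)
    (hd : ∀ v, G.degree v ≤ d) (hk : 2 * (d + 1) ≤ 3 * k) (hfree : G.CliqueFree (k + 1))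
    (hOk : ∀ v, Ok {v}) : HasLocalHittingSets G k (d + 1 - k) Ok U := by
  set S : Finset (Finset V) := {Q ∈ G.cliqueFinset k | Q ⊆ U} with hS
  have hmemS : ∀ {Q}, Q ∈ S ↔ G.IsNClique k Q ∧ Q ⊆ U := by
    simp [hS, SimpleGraph.mem_cliqueFinset_iff]
  obtain ⟨Q, hQU, hQ⟩ := hU.exists_clique
  have hSne : S.Nonempty := ⟨Q, hmemS.2 ⟨hQ, hQU⟩⟩
  have hclique : ∀ A ∈ S, G.IsNClique k A := fun A hA ↦ (hmemS.1 hA).1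
  have hsupU : S.sup id ⊆ U := Finset.sup_le fun A hA ↦ (hmemS.1 hA).2
  have hhajnal := two_mul_le_card_inf_add_card_sup hSne hclique hfree
  have hksup : k ≤ #(S.sup id) := hQ.card_eq ▸
    card_le_card (le_sup (f := id) (hmemS.2 ⟨hQ, hQU⟩))
  have hinfU : S.inf id ⊆ U := (inf_subset_sup hSne).trans hsupU
  refine ⟨S.inf id, hinfU, inf_nonempty_of_not_disjoint hd hk hfree hSne hclique
    fun A hA B hB ↦ hmeet A (hmemS.1 hA).2 B (hmemS.1 hB).2 (hclique A hA) (hclique B hB), ?_⟩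
  intro v hv
  have hout : #(G.neighborFinset v \ U) + #(S.sup id) ≤ d + 1 :=
    (card_neighborFinset_sdiff_add_card_le hsupU (sup_subset_insert_neighborFinset
      (fun A hA ↦ (hclique A hA).isClique) hv)).trans (Nat.succ_le_succ (hd v))
  refine ⟨by omega, by omega, {v}, hOk v, singleton_subset_iff.2 (hinfU hv), ?_, by simp⟩
  intro A hAU hA
  exact not_disjoint_iff.2 ⟨v, mem_inf.1 hv A (hmemS.2 ⟨hA, hAU⟩), mem_singleton_self v⟩

end LocalHittingSets

section King

variable {V : Type*} [Fintype V] {G : SimpleGraph V} [DecidableRel G.Adj] {k d : ℕ}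

theorem not_disjoint_trans_of_degree_le (hd : ∀ v, G.degree v ≤ d) (hk : 2 * (d + 1) < 3 * k)
    {A B C : Finset V} (hA : G.IsNClique k A) (hB : G.IsNClique k B) (hC : G.IsNClique k C)
    (hAB : ¬ Disjoint A B) (hBC : ¬ Disjoint B C) : ¬ Disjoint A C := by
  classical
  have hABcard := two_mul_le_card_inter_add hd hA hB hAB
  have hBCcard := two_mul_le_card_inter_add hd hB hC hBC
  intro hAC
  have hle : #(A ∩ B) + #(B ∩ C) ≤ #B := by
    rw [← card_union_of_disjoint (hAC.mono inter_subset_left inter_subset_right)]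
    exact card_le_card (union_subset inter_subset_right inter_subset_left)
  have := hB.card_eq
  omega

/-- **King's theorem** -/
theorem exists_isIndepSet_forall_not_disjoint (hd : ∀ v, G.degree v ≤ d)
    (hk : 2 * (d + 1) < 3 * k) (hfree : G.CliqueFree (k + 1)) :
    ∃ J : Finset V, G.IsIndepSet J ∧ ∀ Q, G.IsNClique k Q → ¬ Disjoint Q J := by
  classical
  have hk₀ : 0 < k := by omega
  obtain ⟨𝓕, hOk, hhit, hcross⟩ := exists_hittingFamily (D := d + 1 - k)
    (Ok := fun F ↦ G.IsIndepSet (F : Set V)) hk₀ fun U hU ↦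
      hU.hasLocalHittingSets_of_not_disjoint
        (fun A hAU B hBU hA hB ↦ hU.not_disjoint_of_forall_trans hk₀
          (fun _ _ _ _ ↦ not_disjoint_trans_of_degree_le hd hk) hA hAU hB hBU)
        hd hk.le hfree (by simp)
  refine ⟨𝓕.sup id, fun a ha b hb hab ↦ ?_, fun Q hQ ↦ ?_⟩
  · obtain ⟨F, hF, haF⟩ := mem_sup.1 ha
    obtain ⟨F', hF', hbF⟩ := mem_sup.1 hb
    rcases eq_or_ne F F' with rfl | hne
    · exact hOk F hF haF hbF hab
    · exact hcross F hF F' hF' hne a haF b hbF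
  · obtain ⟨F, hF, hQF⟩ := hhit Q hQ
    exact fun hdisj ↦ hQF (hdisj.mono_right (le_sup (f := id) hF))

end King

section Isolate

variable {V : Type*} {H : SimpleGraph V} {I : Finset V}

/-- The graph obtained from `H` by deleting all edges that meet `I`. Keeping the vertices of `I`,
now isolated, instead of deleting them avoids a change of the vertex type. -/
def isolate (H : SimpleGraph V) (I : Finset V) : SimpleGraph V where
  Adj a b := H.Adj a b ∧ a ∉ I ∧ b ∉ I
  symm := ⟨fun _ _ h ↦ ⟨h.1.symm, h.2.2, h.2.1⟩⟩
  loopless := ⟨fun _ h ↦ h.1.ne rfl⟩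

instance [DecidableEq V] [DecidableRel H.Adj] : DecidableRel (isolate H I).Adj :=
  fun a b ↦ inferInstanceAs (Decidable (H.Adj a b ∧ a ∉ I ∧ b ∉ I))

theorem isolate_le : isolate H I ≤ H := fun _ _ h ↦ h.1

variable [Fintype V] [DecidableEq V] [DecidableRel H.Adj] {k d : ℕ}

theorem degree_isolate_add_card_inter_le (v : V) :
    (isolate H I).degree v + #(H.neighborFinset v ∩ I) ≤ H.degree v := by
  rw [← SimpleGraph.card_neighborFinset_eq_degree, ← SimpleGraph.card_neighborFinset_eq_degree,
    ← card_sdiff_add_card_inter (H.neighborFinset v) I]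
  refine Nat.add_le_add_right (card_le_card fun w hw ↦ ?_) _
  have hvw : (isolate H I).Adj v w := (SimpleGraph.mem_neighborFinset _ v w).1 hw
  exact mem_sdiff.2 ⟨(H.mem_neighborFinset v w).2 hvw.1, hvw.2.2⟩

theorem degree_isolate_le_of_maximal (hI : Maximal (fun J : Finset V ↦ H.IsIndepSet J) I)
    (hd : ∀ v, H.degree v ≤ d + 1) (v : V) : (isolate H I).degree v ≤ d := by
  by_cases hvI : v ∈ I
  · have : (isolate H I).neighborFinset v = ∅ := eq_empty_of_forall_notMem fun w hw ↦
      ((SimpleGraph.mem_neighborFinset _ v w).1 hw).2.1 hvI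
    simp [← SimpleGraph.card_neighborFinset_eq_degree, this]
  · obtain ⟨w, hwI, hvw⟩ : ∃ w ∈ I, H.Adj v w := by
      by_contra! hno
      have hinsert : H.IsIndepSet (insert v I : Finset V) := by
        rw [coe_insert]
        exact hI.prop.insert fun w hw _ ↦ ⟨hno w hw, fun h ↦ hno w hw h.symm⟩
      exact hvI (hI.le_of_ge hinsert (subset_insert v I) (mem_insert_self v I))
    have hpos : 0 < #(H.neighborFinset v ∩ I) :=
      card_pos.2 ⟨w, mem_inter.2 ⟨(H.mem_neighborFinset v w).2 hvw, hwI⟩⟩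
    have := degree_isolate_add_card_inter_le (H := H) (I := I) v
    have := hd v
    omega

theorem exists_isIndepSet_isolate (hd : ∀ v, H.degree v ≤ d + 1) (hk : 2 * (d + 2) < 3 * k)
    (hfree : H.CliqueFree (k + 1)) :
    ∃ I : Finset V, H.IsIndepSet I ∧ (∀ v, (isolate H I).degree v ≤ d) ∧
      (isolate H I).CliqueFree k := by
  obtain ⟨J, hJ, hhit⟩ := exists_isIndepSet_forall_not_disjoint hd hk hfree
  obtain ⟨I, hJI, hI⟩ := Finite.exists_le_maximal (p := fun J : Finset V ↦ H.IsIndepSet J) hJ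
  refine ⟨I, hI.prop, degree_isolate_le_of_maximal hI hd, fun Q hQ ↦ ?_⟩
  obtain ⟨x, hxQ, hxJ⟩ := not_disjoint_iff.1 (hhit Q (hQ.mono isolate_le))
  obtain ⟨y, hyQ, hyx⟩ := exists_mem_ne (s := Q) (by rw [hQ.card_eq]; omega) x
  exact (hQ.isClique hxQ hyQ hyx.symm).2.1 (hJI hxJ)

end Isolate

section PairChains

variable {V : Type*} [DecidableEq V] {G : SimpleGraph V} {U : Finset V} {n : ℕ}
  {P : ℕ → Finset V}

/-- `P 0, …, P (n - 1)` are disjoint pairs of vertices in `U` such that any two consecutive pairs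
form a `4`-clique. The values `P i` with `n ≤ i` are irrelevant. -/
structure IsPairChain (G : SimpleGraph V) (U : Finset V) (n : ℕ) (P : ℕ → Finset V) : Prop where
  card_eq : ∀ i < n, #(P i) = 2
  disjoint : ∀ i < n, ∀ j < n, i ≠ j → Disjoint (P i) (P j)
  subset : ∀ i < n, P i ⊆ U
  isNClique : ∀ i, i + 1 < n → G.IsNClique 4 (P i ∪ P (i + 1))

namespace IsPairChain

theorem eq_of_mem (hP : IsPairChain G U n P) {i j : ℕ} (hi : i < n) (hj : j < n) {x : V}
    (hxi : x ∈ P i) (hxj : x ∈ P j) : i = j := by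
  by_contra hij
  exact disjoint_left.1 (hP.disjoint i hi j hj hij) hxi hxj

theorem nonempty (hP : IsPairChain G U n P) {i : ℕ} (hi : i < n) : (P i).Nonempty :=
  card_pos.1 (by rw [hP.card_eq i hi]; exact two_pos)

theorem exists_forall_mem (hP : IsPairChain G U n P) (hn : 0 < n) :
    ∃ s : ℕ → V, ∀ i < n, s i ∈ P i := by
  have : Nonempty V := ⟨(hP.nonempty hn).choose⟩
  exact ⟨fun i ↦ Classical.epsilon (· ∈ P i), fun i hi ↦ Classical.epsilon_spec (hP.nonempty hi)⟩

theorem reverse (hP : IsPairChain G U n P) : IsPairChain G U n fun i ↦ P (n - 1 - i) where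
  card_eq i hi := hP.card_eq _ (by omega)
  disjoint i hi j hj hij := hP.disjoint _ (by omega) _ (by omega) (by omega)
  subset i hi := hP.subset _ (by omega)
  isNClique i hi := by
    have h := hP.isNClique (n - 1 - (i + 1)) (by omega)
    rwa [show n - 1 - (i + 1) + 1 = n - 1 - i by omega, union_comm] at h

theorem card_biUnion (hP : IsPairChain G U n P) : #((range n).biUnion P) = 2 * n := by
  rw [Finset.card_biUnion fun i hi j hj hij ↦
    hP.disjoint i (mem_range.1 hi) j (mem_range.1 hj) hij,
    sum_congr rfl fun i hi ↦ hP.card_eq i (mem_range.1 hi)]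
  simp [mul_comm]

end IsPairChain

/-- The sequence `X, P 0, P 1, …`, by which a chain of pairs is extended. -/
def consPair (X : Finset V) (P : ℕ → Finset V) : ℕ → Finset V
  | 0 => X
  | i + 1 => P i

theorem IsPairChain.cons (hP : IsPairChain G U n P) (hn : 0 < n) (hU : CliqueClosed G 4 U)
    {Q : Finset V} (hQ : G.IsNClique 4 Q) (hPQ : P 0 ⊆ Q)
    (hdisj : ∀ i < n, i ≠ 0 → Disjoint Q (P i)) :
    IsPairChain G U (n + 1) (consPair (Q \ P 0) P) := by
  have hdisj' : ∀ i < n, Disjoint (Q \ P 0) (P i) := by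
    intro i hi
    rcases eq_or_ne i 0 with rfl | hi₀
    · exact disjoint_sdiff_self_left
    · exact (hdisj i hi hi₀).mono_left sdiff_subset
  obtain ⟨x, hx⟩ := hP.nonempty hn
  refine ⟨fun i hi ↦ ?_, fun i hi j hj hij ↦ ?_, fun i hi ↦ ?_, fun i hi ↦ ?_⟩
  · cases i with
    | zero => rw [consPair, card_sdiff_of_subset hPQ, hQ.card_eq, hP.card_eq 0 hn]
    | succ i => exact hP.card_eq i (by omega)
  · cases i <;> cases j
    · exact absurd rfl hij
    · exact hdisj' _ (by omega)
    · exact (hdisj' _ (by omega)).symm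
    · exact hP.disjoint _ (by omega) _ (by omega) (by omega)
  · cases i with
    | zero =>
      exact sdiff_subset.trans
        (hU Q hQ (not_disjoint_iff.2 ⟨x, hPQ hx, hP.subset 0 hn hx⟩))
    | succ i => exact hP.subset i (by omega)
  · cases i with
    | zero => simpa only [consPair, sdiff_union_of_subset hPQ] using hQ
    | succ i => exact hP.isNClique i (by omega)

theorem exists_isPairChain_four {A B C : Finset V} (hU : CliqueClosed G 4 U) (hAU : A ⊆ U)
    (hA : G.IsNClique 4 A) (hB : G.IsNClique 4 B) (hC : G.IsNClique 4 C)
    (hAB : 2 ≤ #(A ∩ B)) (hBC : 2 ≤ #(B ∩ C)) (hAC : Disjoint A C) :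
    ∃ P, IsPairChain G U 4 P := by
  have hdisj : Disjoint (A ∩ B) (B ∩ C) := hAC.mono inter_subset_left inter_subset_right
  have hunion : A ∩ B ∪ B ∩ C = B := by
    refine eq_of_subset_of_card_le (union_subset inter_subset_right inter_subset_left) ?_
    rw [card_union_of_disjoint hdisj, hB.card_eq]
    omega
  have hcard : #(A ∩ B) + #(B ∩ C) = 4 := by
    rw [← card_union_of_disjoint hdisj, hunion, hB.card_eq]
  have hsdiff : B \ (B ∩ C) = A ∩ B := by
    rw [← union_sdiff_cancel_right hdisj, hunion]
  obtain ⟨x, hx⟩ : (A ∩ B).Nonempty := card_pos.1 (by omega)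
  have hBU : B ⊆ U := hU B hB
    (not_disjoint_iff.2 ⟨x, (mem_inter.1 hx).2, hAU (mem_inter.1 hx).1⟩)
  have hsingle : IsPairChain G U 1 fun _ ↦ B ∩ C :=
    ⟨fun _ _ ↦ by omega, fun i hi j hj hij ↦ by omega,
      fun _ _ ↦ inter_subset_left.trans hBU, fun i hi ↦ by omega⟩
  have hdouble := hsingle.cons one_pos hU hB inter_subset_left fun _ _ _ ↦ by omega
  rw [hsdiff] at hdouble
  have htriple := hdouble.cons two_pos hU hA inter_subset_left fun i hi hi₀ ↦ by
    obtain rfl : i = 1 := by omega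
    exact hAC.mono_right inter_subset_right
  refine ⟨_, htriple.reverse.cons three_pos hU hC inter_subset_right fun i hi hi₀ ↦ ?_⟩
  obtain rfl | rfl : i = 1 ∨ i = 2 := by omega
  · exact hAC.symm.mono_right inter_subset_left
  · exact hAC.symm.mono_right sdiff_subset

end PairChains

section ChainStructure

variable {V : Type*} [Fintype V] [DecidableEq V] {G : SimpleGraph V} [DecidableRel G.Adj]
  {U : Finset V} {n : ℕ} {P : ℕ → Finset V}

theorem insert_neighborFinset_eq_union {X Y Z : Finset V} {v : V} (hd : G.degree v ≤ 5)
    (hXY : G.IsNClique 4 (X ∪ Y)) (hYZ : G.IsNClique 4 (Y ∪ Z)) (hXZ : Disjoint X Z)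
    (hY : #Y = 2) (hv : v ∈ Y) : insert v (G.neighborFinset v) = X ∪ Y ∪ Z := by
  refine (eq_of_subset_of_card_le (union_subset
    (subset_insert_neighborFinset_of_isClique hXY.isClique (mem_union_right X hv))
    (subset_union_right.trans
      (subset_insert_neighborFinset_of_isClique hYZ.isClique (mem_union_left Z hv)))) ?_).symm
  have hinter : (X ∪ Y) ∩ (Y ∪ Z) = Y := by
    rw [union_comm X, ← union_inter_distrib_left, disjoint_iff_inter_eq_empty.1 hXZ, union_empty]
  have hunion : X ∪ Y ∪ (Y ∪ Z) = X ∪ Y ∪ Z := by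
    rw [union_assoc, union_assoc, ← union_assoc Y Y, union_self]
  have := card_union_add_card_inter (X ∪ Y) (Y ∪ Z)
  rw [hinter, hunion, hXY.card_eq, hYZ.card_eq] at this
  rw [card_insert_neighborFinset]
  omega

namespace IsPairChain

theorem insert_neighborFinset_eq (hP : IsPairChain G U n P) (hd : ∀ v, G.degree v ≤ 5) {i : ℕ}
    (hi : i + 2 < n) {v : V} (hv : v ∈ P (i + 1)) :
    insert v (G.neighborFinset v) = P i ∪ P (i + 1) ∪ P (i + 2) :=
  insert_neighborFinset_eq_union (hd v) (hP.isNClique i (by omega)) (hP.isNClique (i + 1) hi)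
    (hP.disjoint i (by omega) (i + 2) hi (by omega)) (hP.card_eq (i + 1) (by omega)) hv

theorem neighborFinset_subset (hP : IsPairChain G U n P) (hd : ∀ v, G.degree v ≤ 5) {i : ℕ}
    (hi₀ : i ≠ 0) (hi : i + 1 < n) {v : V} (hv : v ∈ P i) : G.neighborFinset v ⊆ U := by
  obtain ⟨i, rfl⟩ := Nat.exists_eq_succ_of_ne_zero hi₀
  rw [← insert_subset_iff.trans (and_iff_right (hP.subset _ (by omega) hv)),
    hP.insert_neighborFinset_eq hd hi hv]
  exact union_subset (union_subset (hP.subset _ (by omega)) (hP.subset _ (by omega)))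
    (hP.subset _ hi)

theorem eq_succ_or_of_adj (hP : IsPairChain G U n P) (hd : ∀ v, G.degree v ≤ 5) {i j : ℕ}
    (hij : i < j) (hj : j < n) {a b : V} (ha : a ∈ P i) (hb : b ∈ P j) (hab : G.Adj a b) :
    j = i + 1 ∨ (i = 0 ∧ j + 1 = n) := by
  rcases i with _ | i
  · by_contra! hfar
    obtain ⟨j, rfl⟩ := Nat.exists_eq_succ_of_ne_zero hij.ne'
    have ha' : a ∈ insert b (G.neighborFinset b) := by simp [hab.symm]
    rw [hP.insert_neighborFinset_eq hd (by omega) hb] at ha'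
    simp only [mem_union] at ha'
    obtain (h | h) | h := ha' <;> have := hP.eq_of_mem (by omega) (by omega) ha h <;> omega
  · have hb' : b ∈ insert a (G.neighborFinset a) := by simp [hab]
    rw [hP.insert_neighborFinset_eq hd (by omega) ha] at hb'
    simp only [mem_union] at hb'
    obtain (h | h) | h := hb' <;> have := hP.eq_of_mem (by omega) (by omega) hb h <;> omega

theorem eq_union_of_not_disjoint (hP : IsPairChain G U n P) (hd : ∀ v, G.degree v ≤ 5)
    (hn : 4 ≤ n) {Q : Finset V} (hQ : G.IsNClique 4 Q) {i : ℕ} (hi₀ : i ≠ 0) (hi : i + 1 < n)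
    (hmeet : ¬ Disjoint Q (P i)) : ∃ j, j + 1 < n ∧ Q = P j ∪ P (j + 1) := by
  obtain ⟨i, rfl⟩ := Nat.exists_eq_succ_of_ne_zero hi₀
  obtain ⟨v, hvQ, hv⟩ := not_disjoint_iff.1 hmeet
  have hsub : Q ⊆ P i ∪ P (i + 1) ∪ P (i + 2) :=
    (subset_insert_neighborFinset_of_isClique hQ.isClique hvQ).trans
      (hP.insert_neighborFinset_eq hd hi hv).subset
  have hmiss : Disjoint Q (P i) ∨ Disjoint Q (P (i + 2)) := by
    by_contra! hboth
    obtain ⟨⟨a, haQ, ha⟩, b, hbQ, hb⟩ := hboth.imp not_disjoint_iff.1 not_disjoint_iff.1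
    have hab : a ≠ b := fun h ↦ by have := hP.eq_of_mem (by omega) hi ha (h ▸ hb); omega
    have := hP.eq_succ_or_of_adj hd (by omega) hi ha hb (hQ.isClique haQ hbQ hab)
    omega
  rcases hmiss with h | h
  · exact ⟨i + 1, hi, eq_of_subset_of_card_le
      (fun x hx ↦ by have := hsub hx; have := disjoint_left.1 h hx; simp_all)
      (by rw [(hP.isNClique (i + 1) hi).card_eq, hQ.card_eq])⟩
  · exact ⟨i, by omega, eq_of_subset_of_card_le
      (fun x hx ↦ by have := hsub hx; have := disjoint_left.1 h hx; simp_all)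
      (by rw [(hP.isNClique i (by omega)).card_eq, hQ.card_eq])⟩

theorem subset_of_not_disjoint_zero (hP : IsPairChain G U n P) (hd : ∀ v, G.degree v ≤ 5)
    (hn : 1 < n) {Q : Finset V} (hQ : G.IsNClique 4 Q) (hQ₀ : ¬ Disjoint Q (P 0))
    (hQ₁ : Disjoint Q (P 1)) : P 0 ⊆ Q := by
  have hcard := two_mul_le_card_inter_add hd hQ (hP.isNClique 0 hn)
    fun h ↦ hQ₀ (h.mono_right subset_union_left)
  rw [inter_union_distrib_left, disjoint_iff_inter_eq_empty.1 hQ₁, union_empty] at hcard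
  have heq : Q ∩ P 0 = P 0 := eq_of_subset_of_card_le inter_subset_right (by
    rw [hP.card_eq 0 (by omega)]
    omega)
  exact inter_eq_right.1 heq

theorem subset_and_not_disjoint_last (hP : IsPairChain G U n P) (hd : ∀ v, G.degree v ≤ 5)
    (hn : 3 ≤ n) (hU : CliqueClosed G 4 U) (hmax : ∀ P', ¬ IsPairChain G U (n + 1) P')
    {Q : Finset V} (hQ : G.IsNClique 4 Q) (hmid : ∀ i, i ≠ 0 → i + 1 < n → Disjoint Q (P i))
    (hQ₀ : ¬ Disjoint Q (P 0)) : P 0 ⊆ Q ∧ ¬ Disjoint Q (P (n - 1)) := by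
  have hsub := hP.subset_of_not_disjoint_zero hd (by omega) hQ hQ₀ (hmid 1 one_ne_zero (by omega))
  refine ⟨hsub, fun hlast ↦ hmax _ (hP.cons (by omega) hU hQ hsub fun i hi hi₀ ↦ ?_)⟩
  obtain hi' | rfl : i + 1 < n ∨ i = n - 1 := by omega
  · exact hmid i hi₀ hi'
  · exact hlast

theorem eq_union_or_eq_union_last (hP : IsPairChain G U n P) (hd : ∀ v, G.degree v ≤ 5)
    (hn : 4 ≤ n) (hU : CliqueClosed G 4 U) (hmax : ∀ P', ¬ IsPairChain G U (n + 1) P')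
    {Q : Finset V} (hQ : G.IsNClique 4 Q) (hmeet : ¬ Disjoint Q ((range n).biUnion P)) :
    (∃ j, j + 1 < n ∧ Q = P j ∪ P (j + 1)) ∨ Q = P (n - 1) ∪ P 0 := by
  by_cases hmid : ∃ i, i ≠ 0 ∧ i + 1 < n ∧ ¬ Disjoint Q (P i)
  · obtain ⟨i, hi₀, hi, hQi⟩ := hmid
    exact Or.inl (hP.eq_union_of_not_disjoint hd hn hQ hi₀ hi hQi)
  push Not at hmid
  have hfirst := hP.subset_and_not_disjoint_last hd (by omega) hU hmax hQ hmid
  have hlast := hP.reverse.subset_and_not_disjoint_last hd (by omega) hU hmax hQ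
    fun i hi₀ hi ↦ hmid _ (by omega) (by omega)
  simp only [Nat.sub_zero, Nat.sub_self] at hlast
  have hends : P 0 ⊆ Q ∧ P (n - 1) ⊆ Q := by
    rw [disjoint_biUnion_right] at hmeet
    push Not at hmeet
    obtain ⟨i, hi, hQi⟩ := hmeet
    rw [mem_range] at hi
    obtain rfl | rfl : i = 0 ∨ i = n - 1 := by
      by_contra! hne
      exact hQi (hmid i hne.1 (by omega))
    · exact ⟨(hfirst hQi).1, (hlast (hfirst hQi).2).1⟩
    · exact ⟨(hfirst (hlast hQi).2).1, (hlast hQi).1⟩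
  refine Or.inr (eq_of_subset_of_card_le (union_subset hends.2 hends.1) ?_).symm
  rw [card_union_of_disjoint (hP.disjoint _ (by omega) _ (by omega) (by omega)),
    hP.card_eq _ (by omega), hP.card_eq _ (by omega), hQ.card_eq]

theorem subset_biUnion (hP : IsPairChain G U n P) (hd : ∀ v, G.degree v ≤ 5)
    (hn : 4 ≤ n) (hU : IsCluster G 4 U) (hmax : ∀ P', ¬ IsPairChain G U (n + 1) P') :
    U ⊆ (range n).biUnion P := by
  obtain ⟨x, hx⟩ := hP.nonempty (show 0 < n by omega)
  refine hU.subset_of_closed _ (fun Q hQ hmeet ↦ ?_) (not_disjoint_iff.2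
    ⟨x, mem_biUnion.2 ⟨0, mem_range.2 (by omega), hx⟩, hP.subset 0 (by omega) hx⟩)
  have hsub : ∀ i < n, P i ⊆ (range n).biUnion P := fun i hi ↦
    subset_biUnion_of_mem P (mem_range.2 hi)
  obtain ⟨j, hj, rfl⟩ | rfl := hP.eq_union_or_eq_union_last hd hn hU.closed hmax hQ hmeet
  · exact union_subset (hsub j (by omega)) (hsub (j + 1) hj)
  · exact union_subset (hsub _ (by omega)) (hsub 0 (by omega))

theorem exists_eq_union_or_eq_union_last (hP : IsPairChain G U n P) (hd : ∀ v, G.degree v ≤ 5)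
    (hn : 4 ≤ n) (hU : IsCluster G 4 U) (hmax : ∀ P', ¬ IsPairChain G U (n + 1) P')
    {Q : Finset V} (hQU : Q ⊆ U) (hQ : G.IsNClique 4 Q) :
    (∃ j, j + 1 < n ∧ Q = P j ∪ P (j + 1)) ∨ Q = P (n - 1) ∪ P 0 := by
  obtain ⟨x, hx⟩ : Q.Nonempty := card_pos.1 (by rw [hQ.card_eq]; exact four_pos)
  exact hP.eq_union_or_eq_union_last hd hn hU.closed hmax hQ
    (not_disjoint_iff.2 ⟨x, hx, hP.subset_biUnion hd hn hU hmax (hQU hx)⟩)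

end IsPairChain

end ChainStructure

section ChainHittingSets

variable {V : Type*} {H : SimpleGraph V} {I : Finset V}

theorem cliqueFreeOn_union_of_isolate (hI : H.IsIndepSet I) {F : Finset V}
    (hF : ∀ a ∈ F, ∀ b ∈ F, (isolate H I).Adj a b →
      (∀ c ∈ F, (isolate H I).Adj a c → c = b) ∧ ∀ x ∈ I, H.Adj a x → ¬ H.Adj b x) :
    H.CliqueFreeOn (F ∪ I : Set V) 3 := by
  classical
  have hnotMem : ∀ {a b c}, a ∈ (F ∪ I : Set V) → b ∈ (F ∪ I : Set V) →
      H.Adj a b → H.Adj a c → H.Adj b c → c ∉ I := by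
    intro a b c ha hb hab hac hbc hcI
    have haI : a ∉ I := fun haI ↦ hI haI hcI hac.ne hac
    have hbI : b ∉ I := fun hbI ↦ hI hbI hcI hbc.ne hbc
    exact (hF a (ha.resolve_right haI) b (hb.resolve_right hbI) ⟨hab, haI, hbI⟩).2 c hcI hac hbc
  intro T hT hclique
  obtain ⟨a, b, c, hab, hac, hbc, rfl⟩ := SimpleGraph.is3Clique_iff.1 hclique
  simp only [coe_insert, coe_singleton, Set.insert_subset_iff, Set.singleton_subset_iff] at hT
  obtain ⟨ha, hb, hc⟩ := hT
  have haI := hnotMem hb hc hbc hab.symm hac.symm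
  have hbI := hnotMem ha hc hac hab hbc.symm
  have hcI := hnotMem ha hb hab hac hbc
  exact hbc.ne' ((hF a (ha.resolve_right haI) b (hb.resolve_right hbI) ⟨hab, haI, hbI⟩).1 c
    (hc.resolve_right hcI) ⟨hac, haI, hcI⟩)

variable [Fintype V] [DecidableEq V] [DecidableRel H.Adj] {U : Finset V} {n r : ℕ}
  {P : ℕ → Finset V} {s : ℕ → V}

theorem exists_forall_adj_or_exists_forall_not_adj (hn : 1 < n)
    (hne : ∀ i < n, (P i).Nonempty)
    (huniq : ∀ i < n, ∀ v ∈ P i, #(H.neighborFinset v ∩ I) ≤ 1) :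
    (∃ x, ∀ i < n, ∀ v ∈ P i, H.Adj v x) ∨
      ∃ i, i + 1 < n ∧ ∃ u ∈ P i, ∃ v ∈ P (i + 1), ∀ x ∈ I, H.Adj u x → ¬ H.Adj v x := by
  refine or_iff_not_imp_right.2 fun hcommon ↦ ?_
  push Not at hcommon
  have huniq' : ∀ i < n, ∀ v ∈ P i, ∀ x ∈ I, ∀ y ∈ I, H.Adj v x → H.Adj v y → x = y :=
    fun i hi v hv x hx y hy hvx hvy ↦ card_le_one.1 (huniq i hi v hv)
      x (by simp [hx, hvx]) y (by simp [hy, hvy])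
  obtain ⟨u, hu⟩ := hne 0 (by omega)
  obtain ⟨w, hw⟩ := hne 1 hn
  obtain ⟨x, hxI, -, hwx⟩ := hcommon 0 hn u hu w hw
  refine ⟨x, fun i ↦ ?_⟩
  induction i with
  | zero =>
    intro _ v hv
    obtain ⟨y, hyI, hvy, hwy⟩ := hcommon 0 hn v hv w hw
    rwa [huniq' 1 hn w hw x hxI y hyI hwx hwy]
  | succ i ih =>
    intro hi v hv
    obtain ⟨z, hz⟩ := hne i (by omega)
    obtain ⟨y, hyI, hzy, hvy⟩ := hcommon i hi z hz v hv
    rwa [huniq' i (by omega) z hz x hxI y hyI (ih (by omega) z hz) hzy]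

/-- The indices below `n` that are spaced by two, except for the consecutive pair `r, r + 1`; if
`n ≤ r + 1`, there is no exception. -/
def alternating (n r : ℕ) : Finset ℕ :=
  {j ∈ range n | (j % 2 = r % 2 ↔ j ≤ r)}

theorem mem_alternating {j : ℕ} : j ∈ alternating n r ↔ j < n ∧ (j % 2 = r % 2 ↔ j ≤ r) := by
  simp [alternating]

theorem mem_alternating_or_succ_mem {j : ℕ} (hj : j + 1 < n) :
    j ∈ alternating n r ∨ j + 1 ∈ alternating n r := by
  simp only [mem_alternating]
  omega

theorem eq_of_mem_alternating_of_succ_mem {j : ℕ} (hj : j ∈ alternating n r)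
    (hj' : j + 1 ∈ alternating n r) : j = r := by
  rw [mem_alternating] at hj hj'
  omega

namespace IsPairChain

theorem isLocalHittingSet_image_alternating {G : SimpleGraph V} [DecidableRel G.Adj] {v : V}
    (hP : IsPairChain G U n P) (hd : ∀ v, G.degree v ≤ 5) (hn : 4 ≤ n) (hU : IsCluster G 4 U)
    (hmax : ∀ P', ¬ IsPairChain G U (n + 1) P') (hs : ∀ i < n, s i ∈ P i)
    (hends : G.IsNClique 4 (P (n - 1) ∪ P 0) → 0 ∈ alternating n r ∨ n - 1 ∈ alternating n r)
    (hnbr : ∀ i ∈ alternating n r, s i ≠ v → G.neighborFinset (s i) ⊆ U) :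
    IsLocalHittingSet G 4 U v ((alternating n r).image s) := by
  have hlt : ∀ {i}, i ∈ alternating n r → i < n := fun hi ↦ (mem_alternating.1 hi).1
  refine ⟨image_subset_iff.2 fun i hi ↦ hP.subset i (hlt hi) (hs i (hlt hi)), fun Q hQU hQ ↦ ?_,
    forall_mem_image.2 hnbr⟩
  have hhit : ∀ {i}, i ∈ alternating n r → P i ⊆ Q →
      ¬ Disjoint Q ((alternating n r).image s) := fun {i} hi hiQ ↦
    not_disjoint_iff.2 ⟨s i, hiQ (hs i (hlt hi)), mem_image_of_mem s hi⟩
  obtain ⟨j, hj, rfl⟩ | rfl := hP.exists_eq_union_or_eq_union_last hd hn hU hmax hQU hQ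
  · exact (mem_alternating_or_succ_mem hj).elim (hhit · subset_union_left)
      (hhit · subset_union_right)
  · exact (hends hQ).elim (hhit · subset_union_right) (hhit · subset_union_left)

theorem eq_or_eq_of_adj_of_mem_alternating {G : SimpleGraph V} [DecidableRel G.Adj]
    (hP : IsPairChain G U n P) (hd : ∀ v, G.degree v ≤ 5) (hs : ∀ i < n, s i ∈ P i)
    (hends : 0 ∈ alternating n r → n - 1 ∉ alternating n r) {i j : ℕ}
    (hi : i ∈ alternating n r) (hj : j ∈ alternating n r) (hij : G.Adj (s i) (s j)) :
    (i = r ∧ j = r + 1) ∨ (i = r + 1 ∧ j = r) := by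
  wlog hlt : i < j generalizing i j
  · have hne : i ≠ j := fun h ↦ hij.ne (congrArg s h)
    exact (this hj hi hij.symm (by omega)).symm.imp And.symm And.symm
  have hin := (mem_alternating.1 hi).1
  have hjn := (mem_alternating.1 hj).1
  obtain rfl | ⟨rfl, rfl⟩ := hP.eq_succ_or_of_adj hd hlt hjn (hs i hin) (hs j hjn) hij
  · have hir := eq_of_mem_alternating_of_succ_mem hi hj
    exact Or.inl ⟨hir, by rw [hir]⟩
  · exact absurd hj (hends hi)

theorem cliqueFreeOn_image_alternating (hP : IsPairChain (isolate H I) U n P)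
    (hd : ∀ v, (isolate H I).degree v ≤ 5) (hI : H.IsIndepSet I) (hs : ∀ i < n, s i ∈ P i)
    (hends : 0 ∈ alternating n r → n - 1 ∉ alternating n r)
    (hr : r + 1 < n → ∀ x ∈ I, H.Adj (s r) x → ¬ H.Adj (s (r + 1)) x) :
    H.CliqueFreeOn ((alternating n r).image s ∪ I : Set V) 3 := by
  have hadj := fun {i j} ↦ hP.eq_or_eq_of_adj_of_mem_alternating hd hs hends (i := i) (j := j)
  refine cliqueFreeOn_union_of_isolate hI ?_
  simp only [forall_mem_image]
  intro i hi j hj hij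
  refine ⟨fun k hk hik ↦ ?_, ?_⟩
  · have := hadj hi hj hij
    have := hadj hi hk hik
    exact congrArg s (by omega)
  · have hin := (mem_alternating.1 hi).1
    have hjn := (mem_alternating.1 hj).1
    obtain ⟨rfl, rfl⟩ | ⟨rfl, rfl⟩ := hadj hi hj hij
    · exact hr hjn
    · exact fun x hx h h' ↦ hr hin x hx h' h

end IsPairChain

end ChainHittingSets

section ChainClusters

variable {V : Type*} [Fintype V] [DecidableEq V] {G : SimpleGraph V} [DecidableRel G.Adj]
  {H : SimpleGraph V} [DecidableRel H.Adj] {I U : Finset V} {n : ℕ} {P : ℕ → Finset V}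

namespace IsPairChain

theorem card_neighborFinset_zero_sdiff_le (hP : IsPairChain G U n P) (hn : 1 < n)
    {d : ℕ} {v : V} (hd : G.degree v ≤ d + 3) (hv : v ∈ P 0) : #(G.neighborFinset v \ U) ≤ d := by
  have hclique := hP.isNClique 0 hn
  have hle := card_neighborFinset_sdiff_add_card_le
    (union_subset (hP.subset 0 (by omega)) (hP.subset 1 hn))
    (subset_insert_neighborFinset_of_isClique hclique.isClique (mem_union_left (P 1) hv))
  rw [hclique.card_eq] at hle
  omega

theorem exists_insert_neighborFinset_eq (hP : IsPairChain G U n P) (hd : ∀ v, G.degree v ≤ 5)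
    (hn : 3 ≤ n) (hclosed : G.IsNClique 4 (P (n - 1) ∪ P 0)) {i : ℕ} (hi : i < n) :
    ∃ j < n, ∃ k < n, j ≠ i ∧ i ≠ k ∧ j ≠ k ∧
      ∀ v ∈ P i, insert v (G.neighborFinset v) = P j ∪ P i ∪ P k := by
  have hlink : ∀ j < n, ∀ k < n, j ≠ i → i ≠ k → j ≠ k → G.IsNClique 4 (P j ∪ P i) →
      G.IsNClique 4 (P i ∪ P k) → ∃ j < n, ∃ k < n, j ≠ i ∧ i ≠ k ∧ j ≠ k ∧
        ∀ v ∈ P i, insert v (G.neighborFinset v) = P j ∪ P i ∪ P k :=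
    fun j hj k hk hji hik hjk hcj hck ↦ ⟨j, hj, k, hk, hji, hik, hjk, fun v hv ↦
      insert_neighborFinset_eq_union (hd v) hcj hck (hP.disjoint j hj k hk hjk)
        (hP.card_eq i hi) hv⟩
  rcases i with _ | i
  · exact hlink (n - 1) (by omega) 1 (by omega) (by omega) (by omega) (by omega) hclosed
      (hP.isNClique 0 (by omega))
  by_cases hlast : i + 2 = n
  · rw [show n - 1 = i + 1 by omega] at hclosed
    exact hlink i (by omega) 0 (by omega) (by omega) (by omega) (by omega)
      (hP.isNClique i hi) hclosed
  · exact hlink i (by omega) (i + 2) (by omega) (by omega) (by omega) (by omega)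
      (hP.isNClique i hi) (hP.isNClique (i + 1) (by omega))

theorem neighborFinset_subset_of_isNClique (hP : IsPairChain G U n P)
    (hd : ∀ v, G.degree v ≤ 5) (hn : 3 ≤ n) (hclosed : G.IsNClique 4 (P (n - 1) ∪ P 0)) {i : ℕ}
    (hi : i < n) {v : V} (hv : v ∈ P i) : G.neighborFinset v ⊆ U := by
  obtain ⟨j, hj, k, hk, -, -, -, heq⟩ := hP.exists_insert_neighborFinset_eq hd hn hclosed hi
  refine (subset_insert v _).trans ((heq v hv).subset.trans ?_)
  exact union_subset (union_subset (hP.subset j hj) (hP.subset i hi)) (hP.subset k hk)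

theorem degree_eq_of_isNClique (hP : IsPairChain G U n P)
    (hd : ∀ v, G.degree v ≤ 5) (hn : 3 ≤ n) (hclosed : G.IsNClique 4 (P (n - 1) ∪ P 0)) {i : ℕ}
    (hi : i < n) {v : V} (hv : v ∈ P i) : G.degree v = 5 := by
  obtain ⟨j, hj, k, hk, hji, hik, hjk, heq⟩ :=
    hP.exists_insert_neighborFinset_eq hd hn hclosed hi
  have hcard := card_insert_neighborFinset (G := G) v
  rw [heq v hv, card_union_of_disjoint (disjoint_union_left.2
      ⟨hP.disjoint j hj k hk hjk, hP.disjoint i hi k hk hik⟩),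
    card_union_of_disjoint (hP.disjoint j hj i hi hji), hP.card_eq i hi, hP.card_eq j hj,
    hP.card_eq k hk] at hcard
  omega

theorem exists_isLocalHittingSet_of_even (hP : IsPairChain (isolate H I) U n P)
    (hd : ∀ v, (isolate H I).degree v ≤ 5) (hI : H.IsIndepSet I) (hn : 4 ≤ n) (heven : Even n)
    (hU : IsCluster (isolate H I) 4 U) (hmax : ∀ P', ¬ IsPairChain (isolate H I) U (n + 1) P')
    {v : V} (hv : v ∈ P 0) :
    ∃ F : Finset V, H.CliqueFreeOn (F ∪ I : Set V) 3 ∧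
      IsLocalHittingSet (isolate H I) 4 U v F := by
  have hn₂ := Nat.even_iff.1 heven
  obtain ⟨s, hs⟩ := hP.exists_forall_mem (by omega)
  have hs' : ∀ i < n, Function.update s 0 v i ∈ P i := by
    intro i hi
    rcases eq_or_ne i 0 with rfl | hi₀
    · simpa using hv
    · simpa [hi₀] using hs i hi
  refine ⟨_, hP.cliqueFreeOn_image_alternating (r := n) hd hI hs' ?_ (by omega),
    hP.isLocalHittingSet_image_alternating (r := n) hd hn hU hmax hs' ?_ fun i hi hiv ↦ ?_⟩
  · simp only [mem_alternating]
    omega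
  · simp only [mem_alternating]
    omega
  · have hi₀ : i ≠ 0 := by
      rintro rfl
      exact hiv (Function.update_self 0 v s)
    rw [mem_alternating] at hi
    exact hP.neighborFinset_subset hd hi₀ (by omega) (hs' i hi.1)

theorem hasLocalHittingSets_of_even (hP : IsPairChain (isolate H I) U n P)
    (hd : ∀ v, (isolate H I).degree v ≤ 5) (hI : H.IsIndepSet I) (hn : 4 ≤ n) (heven : Even n)
    (hU : IsCluster (isolate H I) 4 U) (hmax : ∀ P', ¬ IsPairChain (isolate H I) U (n + 1) P') :
    HasLocalHittingSets (isolate H I) 4 2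
      (fun F ↦ H.CliqueFreeOn (F ∪ I : Set V) 3) U := by
  have hcard : #(P 0 ∪ P (n - 1)) = 4 := by
    rw [card_union_of_disjoint (hP.disjoint _ (by omega) _ (by omega) (by omega)),
      hP.card_eq _ (by omega), hP.card_eq _ (by omega)]
  refine ⟨P 0 ∪ P (n - 1), union_subset (hP.subset _ (by omega)) (hP.subset _ (by omega)),
    (hP.nonempty (by omega)).inl, fun v hv ↦ ?_⟩
  have hv' : #((isolate H I).neighborFinset v \ U) ≤ 2 ∧
      ∃ F : Finset V, H.CliqueFreeOn (F ∪ I : Set V) 3 ∧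
        IsLocalHittingSet (isolate H I) 4 U v F := by
    obtain hv | hv := mem_union.1 hv
    · exact ⟨hP.card_neighborFinset_zero_sdiff_le (by omega) (hd v) hv,
        hP.exists_isLocalHittingSet_of_even hd hI hn heven hU hmax hv⟩
    · exact ⟨hP.reverse.card_neighborFinset_zero_sdiff_le (by omega) (hd v) hv,
        hP.reverse.exists_isLocalHittingSet_of_even hd hI hn heven hU hmax hv⟩
  exact ⟨hv'.1, by omega, hv'.2⟩

theorem hasLocalHittingSets_of_neighborFinset_subset {Ok : Finset V → Prop} {F : Finset V}
    (hP : IsPairChain G U n P) {i : ℕ} (hi : i < n)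
    (hnbr : ∀ v ∈ P i, G.neighborFinset v ⊆ U) (hOk : Ok F)
    (hF : ∀ v, IsLocalHittingSet G 4 U v F) : HasLocalHittingSets G 4 2 Ok U := by
  refine ⟨P i, hP.subset i hi, hP.nonempty hi, fun v hv ↦ ?_⟩
  rw [sdiff_eq_empty_iff_subset.2 (hnbr v hv), hP.card_eq i hi, card_empty]
  exact ⟨zero_le, le_rfl, F, hOk, hF v⟩

theorem hasLocalHittingSets_of_odd_of_not_isNClique (hP : IsPairChain (isolate H I) U n P)
    (hd : ∀ v, (isolate H I).degree v ≤ 5) (hI : H.IsIndepSet I) (hn : 4 ≤ n) (hodd : Odd n)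
    (hopen : ¬ (isolate H I).IsNClique 4 (P (n - 1) ∪ P 0))
    (hU : IsCluster (isolate H I) 4 U) (hmax : ∀ P', ¬ IsPairChain (isolate H I) U (n + 1) P') :
    HasLocalHittingSets (isolate H I) 4 2
      (fun F ↦ H.CliqueFreeOn (F ∪ I : Set V) 3) U := by
  have hn₂ := Nat.odd_iff.1 hodd
  obtain ⟨s, hs⟩ := hP.exists_forall_mem (by omega)
  refine hP.hasLocalHittingSets_of_neighborFinset_subset (i := 1) (by omega)
    (fun v ↦ hP.neighborFinset_subset hd one_ne_zero (by omega))
    (hP.cliqueFreeOn_image_alternating (r := n) hd hI hs ?_ (by omega)) fun v ↦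
      hP.isLocalHittingSet_image_alternating hd hn hU hmax hs (fun h ↦ absurd h hopen)
        fun i hi _ ↦ ?_
  · simp only [mem_alternating]
    omega
  · rw [mem_alternating] at hi
    exact hP.neighborFinset_subset hd (by omega) (by omega) (hs i hi.1)

theorem exists_forall_not_adj_of_isNClique (hP : IsPairChain (isolate H I) U n P)
    (hd : ∀ v, (isolate H I).degree v ≤ 5) (hdH : ∀ v, H.degree v ≤ 6) (hn : 4 ≤ n)
    (hclosed : (isolate H I).IsNClique 4 (P (n - 1) ∪ P 0)) :
    ∃ i, i + 1 < n ∧ ∃ u ∈ P i, ∃ v ∈ P (i + 1), ∀ x ∈ I, H.Adj u x → ¬ H.Adj v x := by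
  have huniq : ∀ i < n, ∀ v ∈ P i, #(H.neighborFinset v ∩ I) ≤ 1 := fun i hi v hv ↦ by
    have := degree_isolate_add_card_inter_le (H := H) (I := I) v
    have := hP.degree_eq_of_isNClique hd (by omega) hclosed hi hv
    have := hdH v
    omega
  refine (exists_forall_adj_or_exists_forall_not_adj (by omega) (fun i hi ↦ hP.nonempty hi)
    huniq).resolve_left fun ⟨x, hx⟩ ↦ ?_
  have hsub : (range n).biUnion P ⊆ H.neighborFinset x := biUnion_subset.2 fun i hi v hv ↦
    (H.mem_neighborFinset x v).2 (hx i (mem_range.1 hi) v hv).symm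
  have hle := card_le_card hsub
  rw [hP.card_biUnion, SimpleGraph.card_neighborFinset_eq_degree] at hle
  have := hdH x
  omega

theorem hasLocalHittingSets_of_odd_of_isNClique (hP : IsPairChain (isolate H I) U n P)
    (hd : ∀ v, (isolate H I).degree v ≤ 5) (hdH : ∀ v, H.degree v ≤ 6) (hI : H.IsIndepSet I)
    (hn : 4 ≤ n) (hodd : Odd n) (hclosed : (isolate H I).IsNClique 4 (P (n - 1) ∪ P 0))
    (hU : IsCluster (isolate H I) 4 U) (hmax : ∀ P', ¬ IsPairChain (isolate H I) U (n + 1) P') :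
    HasLocalHittingSets (isolate H I) 4 2
      (fun F ↦ H.CliqueFreeOn (F ∪ I : Set V) 3) U := by
  have hn₂ := Nat.odd_iff.1 hodd
  have hnbr := fun {i} hi {v} hv ↦
    hP.neighborFinset_subset_of_isNClique hd (by omega) hclosed (i := i) hi (v := v) hv
  obtain ⟨r, hr, u, hu, w, hw, huw⟩ := hP.exists_forall_not_adj_of_isNClique hd hdH hn hclosed
  obtain ⟨s, hs, rfl, rfl⟩ : ∃ s : ℕ → V, (∀ i < n, s i ∈ P i) ∧ s r = u ∧ s (r + 1) = w := by
    obtain ⟨s, hs⟩ := hP.exists_forall_mem (by omega)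
    refine ⟨Function.update (Function.update s r u) (r + 1) w, fun i hi ↦ ?_, by simp, by simp⟩
    simp only [Function.update_apply]
    split_ifs with h h' <;> simp_all
  refine hP.hasLocalHittingSets_of_neighborFinset_subset (i := 0) (by omega)
    (fun v ↦ hnbr (by omega))
    (hP.cliqueFreeOn_image_alternating (r := r) hd hI hs ?_ fun _ ↦ huw) fun v ↦
      hP.isLocalHittingSet_image_alternating hd hn hU hmax hs (fun _ ↦ ?_)
        fun i hi _ ↦ hnbr (mem_alternating.1 hi).1 (hs i (mem_alternating.1 hi).1)
  all_goals
    simp only [mem_alternating]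
    omega

end IsPairChain

theorem IsCluster.hasLocalHittingSets_of_isPairChain (hU : IsCluster (isolate H I) 4 U)
    (hd : ∀ v, (isolate H I).degree v ≤ 5) (hdH : ∀ v, H.degree v ≤ 6) (hI : H.IsIndepSet I)
    (hP : IsPairChain (isolate H I) U 4 P) :
    HasLocalHittingSets (isolate H I) 4 2
      (fun F ↦ H.CliqueFreeOn (F ∪ I : Set V) 3) U := by
  obtain ⟨n, hn, ⟨P, hP⟩, hmax⟩ : ∃ n, 4 ≤ n ∧ (∃ P, IsPairChain (isolate H I) U n P) ∧
      ∀ P', ¬ IsPairChain (isolate H I) U (n + 1) P' := by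
    by_contra! hextend
    have hchain : ∀ n ≥ 4, ∃ P, IsPairChain (isolate H I) U n P :=
      Nat.le_induction ⟨P, hP⟩ hextend
    obtain ⟨P, hP⟩ := hchain (Fintype.card V + 4) (by omega)
    have := hP.card_biUnion ▸ card_le_univ ((range _).biUnion P)
    omega
  obtain heven | hodd := Nat.even_or_odd n
  · exact hP.hasLocalHittingSets_of_even hd hI hn heven hU hmax
  by_cases hclosed : (isolate H I).IsNClique 4 (P (n - 1) ∪ P 0)
  · exact hP.hasLocalHittingSets_of_odd_of_isNClique hd hdH hI hn hodd hclosed hU hmax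
  · exact hP.hasLocalHittingSets_of_odd_of_not_isNClique hd hI hn hodd hclosed hU hmax

theorem IsCluster.hasLocalHittingSets_isolate (hU : IsCluster (isolate H I) 4 U)
    (hd : ∀ v, (isolate H I).degree v ≤ 5) (hdH : ∀ v, H.degree v ≤ 6) (hI : H.IsIndepSet I)
    (hfree : (isolate H I).CliqueFree 5) :
    HasLocalHittingSets (isolate H I) 4 2
      (fun F ↦ H.CliqueFreeOn (F ∪ I : Set V) 3) U := by
  by_cases hchain : ∃ P, IsPairChain (isolate H I) U 4 P
  · obtain ⟨P, hP⟩ := hchain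
    exact hU.hasLocalHittingSets_of_isPairChain hd hdH hI hP
  · refine hU.hasLocalHittingSets_of_not_disjoint (fun A hAU B hBU hA hB ↦
      hU.not_disjoint_of_forall_trans four_pos (fun A B C hAU hA hB hC hAB hBC hAC ↦ ?_)
        hA hAU hB hBU) hd (by omega) hfree fun v ↦ ?_
    · have hABcard := two_mul_le_card_inter_add hd hA hB hAB
      have hBCcard := two_mul_le_card_inter_add hd hB hC hBC
      exact hchain (exists_isPairChain_four hU.closed hAU hA hB hC (by omega) (by omega) hAC)
    · refine cliqueFreeOn_union_of_isolate hI ?_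
      simp

end ChainClusters

section Splitting

variable {V : Type*} {H : SimpleGraph V} {I : Finset V} {p q : ℕ}

/-- The vertices of `H` can be partitioned into a `K_p`-free set and a `K_q`-free set `S`. -/
def Splittable (H : SimpleGraph V) (p q : ℕ) : Prop :=
  ∃ S : Set V, H.CliqueFreeOn Sᶜ p ∧ H.CliqueFreeOn S q

theorem Splittable.symm (h : Splittable H p q) : Splittable H q p := by
  obtain ⟨S, hSc, hS⟩ := h
  exact ⟨Sᶜ, by rwa [compl_compl], hSc⟩

theorem splittable_one (hfree : H.CliqueFree p) : Splittable H p 1 :=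
  ⟨∅, hfree.cliqueFreeOn, by simp⟩

theorem isClique_isolate {Q : Set V} (hQ : H.IsClique Q) (hQI : Disjoint Q I) :
    (isolate H I).IsClique Q := fun _ ha _ hb hab ↦
  ⟨hQ ha hb hab, Set.disjoint_left.1 hQI ha, Set.disjoint_left.1 hQI hb⟩

theorem card_le_card_sdiff_add_one_of_isClique [DecidableEq V] {Q : Finset V}
    (hQ : H.IsClique Q) (hI : H.IsIndepSet I) : #Q ≤ #(Q \ I) + 1 := by
  have hinter : #(Q ∩ I) ≤ 1 := card_le_one.2 fun a ha b hb ↦ by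
    rw [mem_inter] at ha hb
    by_contra hab
    exact hI ha.2 hb.2 hab (hQ ha.1 hb.1 hab)
  have := card_sdiff_add_card_inter Q I
  omega

theorem Splittable.of_isolate (h : Splittable (isolate H I) p q) (hI : H.IsIndepSet I) :
    Splittable H p (q + 1) := by
  classical
  obtain ⟨S, hSc, hS⟩ := h
  refine ⟨S ∪ I, fun Q hQ hclique ↦ ?_, fun Q hQ hclique ↦ ?_⟩
  · rw [Set.compl_union, Set.subset_inter_iff] at hQ
    exact hSc hQ.1 ⟨isClique_isolate hclique.isClique (Set.subset_compl_iff_disjoint_right.1 hQ.2),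
      hclique.card_eq⟩
  · have hle := card_le_card_sdiff_add_one_of_isClique hclique.isClique hI
    rw [hclique.card_eq] at hle
    obtain ⟨R, hRQ, hR⟩ := exists_subset_card_eq (Nat.le_of_succ_le_succ hle)
    have hRI : R ⊆ Q ∧ Disjoint R I := subset_sdiff.1 hRQ
    refine hS (t := R) (fun x hx ↦ (hQ (hRI.1 hx)).resolve_right (disjoint_left.1 hRI.2 hx))
      ⟨isClique_isolate (hclique.isClique.subset (coe_subset.2 hRI.1))
        (disjoint_coe.2 hRI.2), hR⟩

theorem cliqueFreeOn_sup_union [DecidableEq V] {𝓕 : Finset (Finset V)}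
    (hI : H.IsIndepSet I) (hfree : ∀ F ∈ 𝓕, H.CliqueFreeOn (F ∪ I : Set V) 3)
    (hcross : ∀ F ∈ 𝓕, ∀ F' ∈ 𝓕, F ≠ F' → ∀ a ∈ F, ∀ b ∈ F', ¬ (isolate H I).Adj a b) :
    H.CliqueFreeOn (↑(𝓕.sup id) ∪ I : Set V) 3 := by
  intro T hT hclique
  have hmem : ∀ x ∈ T, x ∉ I → ∃ F ∈ 𝓕, x ∈ F := fun x hx hxI ↦
    mem_sup.1 ((hT hx).resolve_right hxI)
  obtain ⟨x, hx⟩ : (T \ I).Nonempty := by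
    have := card_le_card_sdiff_add_one_of_isClique hclique.isClique hI
    rw [hclique.card_eq] at this
    exact card_pos.1 (by omega)
  obtain ⟨hxT, hxI⟩ := mem_sdiff.1 hx
  obtain ⟨F, hF, hxF⟩ := hmem x hxT hxI
  refine hfree F hF (fun y hyT ↦ or_iff_not_imp_right.2 fun hyI ↦ ?_) hclique
  obtain ⟨F', hF', hyF'⟩ := hmem y hyT hyI
  by_contra hyF
  have hxy : x ≠ y := fun h ↦ hyF (h ▸ hxF)
  exact hcross F hF F' hF' (fun h ↦ hyF (h ▸ hyF')) x hxF y hyF'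
    ⟨hclique.isClique hxT hyT hxy, hxI, hyI⟩

variable [Fintype V]

theorem splittable_four_three [DecidableRel H.Adj] (hd : ∀ v, H.degree v ≤ 6)
    (hfree : H.CliqueFree 6) : Splittable H 4 3 := by
  classical
  obtain ⟨I, hI, hdI, hfreeI⟩ := exists_isIndepSet_isolate (d := 5) hd (by omega) hfree
  obtain ⟨𝓕, hOk, hhit, hcross⟩ := exists_hittingFamily four_pos fun U hU ↦
    hU.hasLocalHittingSets_isolate hdI hd hI hfreeI
  refine ⟨↑(𝓕.sup id) ∪ I, fun Q hQ hclique ↦ ?_, cliqueFreeOn_sup_union hI hOk hcross⟩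
  rw [Set.compl_union, Set.subset_inter_iff] at hQ
  obtain ⟨F, hF, hQF⟩ := hhit Q
    ⟨isClique_isolate hclique.isClique (Set.subset_compl_iff_disjoint_right.1 hQ.2),
      hclique.card_eq⟩
  exact hQF (disjoint_left.2 fun x hxQ hxF ↦ hQ.1 hxQ (mem_sup.2 ⟨F, hF, hxF⟩))

theorem splittable_of_splittable_of_le {q₀ : ℕ} (hp : 6 ≤ p + q₀)
    (hbase : ∀ (H : SimpleGraph V) [DecidableRel H.Adj], (∀ v, H.degree v < p + q₀) →
      H.CliqueFree (p + q₀ - 1) → Splittable H p q₀)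
    (hq : q₀ ≤ q) (H : SimpleGraph V) [DecidableRel H.Adj] (hd : ∀ v, H.degree v < p + q)
    (hfree : H.CliqueFree (p + q - 1)) : Splittable H p q := by
  classical
  induction q, hq using Nat.le_induction generalizing H with
  | base => exact hbase H hd hfree
  | succ q hq ih =>
    obtain ⟨I, hI, hdI, hfreeI⟩ := exists_isIndepSet_isolate (d := p + q - 1) (k := p + q - 1)
      (fun v ↦ by have := hd v; omega) (by omega)
      (hfree.mono (by omega))
    exact (ih (isolate H I) (fun v ↦ by have := hdI v; omega) hfreeI).of_isolate hI

theorem splittable_of_degree_lt [DecidableRel H.Adj] (hp : 1 ≤ p) (hq : 1 ≤ q)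
    (hpq : 7 ≤ p + q) (hd : ∀ v, H.degree v < p + q) (hfree : H.CliqueFree (p + q - 1)) :
    Splittable H p q := by
  wlog hqp : q ≤ p generalizing p q
  · rw [add_comm] at hpq hd hfree
    exact (this hq hp hpq hd hfree (by omega)).symm
  obtain rfl | hp₅ : p = 4 ∨ 5 ≤ p := by omega
  · exact splittable_of_splittable_of_le (q₀ := 3) (by omega)
      (fun H _ hd hfree ↦ splittable_four_three (fun v ↦ Nat.le_of_lt_succ (hd v)) hfree)
      (by omega) H hd hfree
  · exact splittable_of_splittable_of_le (by omega) (fun H _ _ hfree ↦ splittable_one hfree)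
      hq H hd hfree

end Splitting

theorem statement1_general {V : Type*} [Fintype V] (H : SimpleGraph V) [DecidableRel H.Adj]
    (p q : ℕ) (hp : 1 ≤ p) (hq : 1 ≤ q) (hpq : 7 ≤ p + q) (hΔ : H.maxDegree < p + q)
    (hω : H.cliqueNum + 2 ≤ p + q) :
    ∃ V₁ V₂ : Set V, V₁ ∪ V₂ = Set.univ ∧ Disjoint V₁ V₂ ∧
      H.CliqueFreeOn V₁ p ∧ H.CliqueFreeOn V₂ q := by
  have hfree : H.CliqueFree (p + q - 1) := fun Q hQ ↦ by
    have := hQ.isClique.card_le_cliqueNum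
    rw [hQ.card_eq] at this
    omega
  obtain ⟨S, hSc, hS⟩ := splittable_of_degree_lt hp hq hpq
    (fun v ↦ (H.degree_le_maxDegree v).trans_lt hΔ) hfree
  exact ⟨Sᶜ, S, Set.compl_union_self S, disjoint_compl_left, hSc, hS⟩

/-- Let `H` be a finite simple graph with `Δ(H) ≥ 6` and `ω(H) ≤ Δ(H) − 1`, and let
`p ≥ 4`, `q ≥ 2` be integers with `p + q = Δ(H) + 1`. Then `V(H)` can be partitioned
into two sets `V₁, V₂` such that `H[V₁]` is `K_p`-free and `H[V₂]` is `K_q`-free. -/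
theorem statement1 {V : Type*} [Fintype V] (H : SimpleGraph V) [DecidableRel H.Adj]
    (hΔ : 6 ≤ H.maxDegree) (hω : H.cliqueNum ≤ H.maxDegree - 1)
    (p q : ℕ) (hp : 4 ≤ p) (hq : 2 ≤ q) (hpq : p + q = H.maxDegree + 1) :
    ∃ V₁ V₂ : Set V, V₁ ∪ V₂ = Set.univ ∧ Disjoint V₁ V₂ ∧
      H.CliqueFreeOn V₁ p ∧ H.CliqueFreeOn V₂ q :=
  statement1_general H p q (by omega) (by omega) (by omega) (by omega) (by omega)
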